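/- (Theorem 4.3, second identity.) In U(gl(m,ℂ)), for every q ≥ 0 and all 1 ≤ k,l ≤ m, Σ_{p=0}^q binom(q,p)·(−m)^{q−p}·e_{kl}^p = (−1)^q · Σ_{p=0}^q K_{q−p}(−c̃)·ẽ_{lk}^p (note the transposed indices l,k on the right-hand side). -/

import Mathlib

open Finset

attribute [local instance 100] LieRing.ofAssociativeRing

/-- `gl(m, ℂ)`: the Lie algebra of `m × m` complex matrices. -/
abbrev glm (m : ℕ) := Matrix (Fin m) (Fin m) ℂ

/-- The universal enveloping algebra `U(gl(m,ℂ))`. -/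
abbrev UEA (m : ℕ) := UniversalEnvelopingAlgebra ℂ (glm m)

/-- The image of the matrix unit `e_{kl}` in `U(gl(m,ℂ))`. -/
noncomputable def E {m : ℕ} (k l : Fin m) : UEA m :=
  UniversalEnvelopingAlgebra.ι ℂ (Matrix.single k l (1 : ℂ))

/-- `e_{kl}^q`, defined by `e_{kl}^0 = δ_{kl}` and `e_{kl}^{q+1} = Σ_i e_{ki} e_{il}^q`. -/
noncomputable def Epow {m : ℕ} : ℕ → Fin m → Fin m → UEA m
  | 0, k, l => if k = l then 1 else 0
  | q + 1, k, l => ∑ i, E k i * Epow q i l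

/-- `ẽ_{kl}^q`, defined by `ẽ_{kl}^0 = δ_{kl}` and `ẽ_{kl}^{q+1} = −Σ_i e_{ik} ẽ_{il}^q`. -/
noncomputable def Etil {m : ℕ} : ℕ → Fin m → Fin m → UEA m
  | 0, k, l => if k = l then 1 else 0
  | q + 1, k, l => -∑ i, E i k * Etil q i l

/-- The Casimir element `c_q = Σ_k e_{kk}^q`. -/
noncomputable def Cas (m : ℕ) (q : ℕ) : UEA m := ∑ k : Fin m, Epow q k k

/-- The Casimir element `c̃_q = Σ_k ẽ_{kk}^q`. -/
noncomputable def CasT (m : ℕ) (q : ℕ) : UEA m := ∑ k : Fin m, Etil q k k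

/-- `K_n(−c) ∈ U(gl(m,ℂ))`: `K_0(−c) = 1` and `K_n(−c) = Σ_{p=0}^{n−1} K_p(−c)·c_{n−1−p}`. -/
noncomputable def Kc (m : ℕ) : ℕ → UEA m
  | 0 => 1
  | n + 1 => ∑ p ∈ (Finset.range (n + 1)).attach, Kc m p.1 * Cas m (n - p.1)
  decreasing_by exact Finset.mem_range.mp p.2

/-- `K_n(−c̃) ∈ U(gl(m,ℂ))`: `K_0(−c̃) = 1` and `K_n(−c̃) = Σ_{p=0}^{n−1} K_p(−c̃)·c̃_{n−1−p}`. -/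
noncomputable def KcT (m : ℕ) : ℕ → UEA m
  | 0 => 1
  | n + 1 => ∑ p ∈ (Finset.range (n + 1)).attach, KcT m p.1 * CasT m (n - p.1)
  decreasing_by exact Finset.mem_range.mp p.2

theorem E_comm {m : ℕ} (i j k l : Fin m) :
    E i j * E k l - E k l * E i j
      = (if j = k then E i l else 0) - (if l = i then E k j else 0) := by
  have h : ⁅(E i j : UEA m), E k l⁆ = E i j * E k l - E k l * E i j := LieRing.of_associative_ring_bracket _ _
  rw [← h]
  unfold E
  rw [← LieHom.map_lie, LieRing.of_associative_ring_bracket, map_sub]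
  congr 1
  · split_ifs with h
    · subst h; simp
    · rw [Matrix.single_mul_single_of_ne _ _ _ _ h, map_zero]
  · split_ifs with h
    · subst h; simp
    · rw [Matrix.single_mul_single_of_ne _ _ _ _ h, map_zero]

theorem Etil_comm {m : ℕ} (p : ℕ) (i j k l : Fin m) :
    E i j * Etil p k l - Etil p k l * E i j
      = (if j = l then Etil p k i else 0) - (if k = i then Etil p j l else 0) := by
  induction p generalizing k l with
  | zero =>
    simp only [Etil]
    split_ifs <;> simp_all
  | succ p ih =>
    have key : ∀ a : Fin m, E i j * (E a k * Etil p a l) - (E a k * Etil p a l) * E i j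
        = ((if j = a then E i k * Etil p a l else 0) - (if k = i then E a j * Etil p a l else 0))
          + ((if j = l then E a k * Etil p a i else 0)
            - (if a = i then E a k * Etil p j l else 0)) := by
      intro a
      have e : E i j * (E a k * Etil p a l) - (E a k * Etil p a l) * E i j
          = (E i j * E a k - E a k * E i j) * Etil p a l
            + E a k * (E i j * Etil p a l - Etil p a l * E i j) := by
        simp only [sub_mul, mul_sub, mul_assoc]; abel
      rw [e, E_comm, ih]
      simp only [sub_mul, mul_sub, ite_mul, mul_ite, zero_mul, mul_zero]
    simp only [Etil]
    rw [mul_neg, neg_mul, sub_neg_eq_add, neg_add_eq_sub, Finset.mul_sum, Finset.sum_mul,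
      ← neg_sub, ← Finset.sum_sub_distrib, Finset.sum_congr rfl fun a _ => key a,
      Finset.sum_add_distrib, Finset.sum_sub_distrib, Finset.sum_sub_distrib]
    simp only [Finset.sum_ite_eq, Finset.sum_ite_eq', Finset.mem_univ, if_true]
    split_ifs <;> simp <;> abel

theorem Etil_succ' {m : ℕ} (p : ℕ) (k l : Fin m) :
    Etil (p + 1) k l = -∑ i, Etil p k i * E l i := by
  induction p generalizing k l with
  | zero => simp [Etil]
  | succ p ih =>
    rw [Etil, Finset.sum_congr rfl fun i _ => by rw [ih]]
    simp only [Etil, Finset.mul_sum, Finset.sum_mul, mul_neg, neg_mul, Finset.sum_neg_distrib]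
    rw [Finset.sum_comm]
    simp only [mul_assoc]

theorem CasT_comm {m : ℕ} (p : ℕ) (i j : Fin m) : Commute (E i j) (CasT m p) := by
  unfold CasT
  rw [commute_iff_eq, ← sub_eq_zero, Finset.mul_sum, Finset.sum_mul, ← Finset.sum_sub_distrib,
    Finset.sum_congr rfl fun a _ => Etil_comm p i j a a, Finset.sum_sub_distrib]
  simp

theorem KcT_succ (m n : ℕ) :
    KcT m (n + 1) = ∑ p ∈ Finset.range (n + 1), KcT m p * CasT m (n - p) := by
  rw [KcT]
  exact Finset.sum_attach (Finset.range (n + 1)) fun p => KcT m p * CasT m (n - p)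

theorem KcT_comm {m : ℕ} (n : ℕ) (i j : Fin m) : Commute (E i j) (KcT m n) := by
  induction n using Nat.strong_induction_on with
  | _ n ih =>
    cases n with
    | zero => rw [KcT]; exact Commute.one_right _
    | succ n =>
      rw [KcT_succ]
      exact Commute.sum_right _ _ _ fun p hp =>
        (ih p (Finset.mem_range.mp hp)).mul_right (CasT_comm _ i j)

theorem E_Etil {m : ℕ} (p : ℕ) (k l : Fin m) :
    ∑ i, E k i * Etil p l i
      = -Etil (p + 1) l k + (m : ℂ) • Etil p l k - (if l = k then CasT m p else 0) := by
  have h : ∀ i, E k i * Etil p l i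
      = Etil p l i * E k i + (Etil p l k - (if l = k then Etil p i i else 0)) := by
    intro i
    have := Etil_comm p k i l i
    rw [if_pos rfl] at this
    rw [← this]; abel
  rw [Finset.sum_congr rfl fun i _ => h i, Finset.sum_add_distrib, Finset.sum_sub_distrib,
    Etil_succ', neg_neg, CasT]
  simp only [Finset.sum_const, Finset.card_univ, Fintype.card_fin]
  rw [Nat.cast_smul_eq_nsmul ℂ]
  split_ifs <;> simp [add_sub_assoc]

/-- The left-hand side. -/
noncomputable def Lside {m : ℕ} (q : ℕ) (k l : Fin m) : UEA m :=
  ∑ p ∈ Finset.range (q + 1), ((q.choose p : ℂ) * (-(m : ℂ)) ^ (q - p)) • Epow p k l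

/-- The unsigned right-hand side. -/
noncomputable def Rside {m : ℕ} (q : ℕ) (k l : Fin m) : UEA m :=
  ∑ p ∈ Finset.range (q + 1), KcT m (q - p) * Etil p l k

theorem Lside_succ {m : ℕ} (q : ℕ) (k l : Fin m) :
    Lside (q + 1) k l = ∑ i, E k i * Lside q i l - (m : ℂ) • Lside q k l := by
  have h1 : ∑ i, E k i * Lside q i l
      = ∑ p ∈ Finset.range (q + 1),
        ((q.choose p : ℂ) * (-(m : ℂ)) ^ (q - p)) • Epow (p + 1) k l := by
    simp only [Lside, Finset.mul_sum, Epow, Finset.smul_sum, mul_smul_comm]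
    rw [Finset.sum_comm]
  have h2 : -((m : ℂ) • Lside q k l)
      = ∑ p ∈ Finset.range (q + 1 + 1),
        ((q.choose p : ℂ) * (-(m : ℂ)) ^ (q + 1 - p)) • Epow p k l := by
    rw [Finset.sum_range_succ _ (q + 1), Nat.choose_succ_self, Lside, Finset.smul_sum,
      ← Finset.sum_neg_distrib]
    simp only [Nat.cast_zero, zero_mul, zero_smul, add_zero]
    refine Finset.sum_congr rfl fun p hp => ?_
    have hp : p ≤ q := Nat.lt_succ_iff.mp (Finset.mem_range.mp hp)
    rw [smul_smul, ← neg_smul, Nat.succ_sub hp, pow_succ]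
    congr 1
    ring
  rw [sub_eq_add_neg, h1, h2, Finset.sum_range_succ' _ (q + 1), ← add_assoc,
    ← Finset.sum_add_distrib, Lside, Finset.sum_range_succ' _ (q + 1)]
  congr 1
  · refine Finset.sum_congr rfl fun p hp => ?_
    rw [← add_smul, Nat.choose_succ_succ, Nat.add_sub_add_right]
    push_cast
    rw [add_mul]
  · simp

theorem Rside_succ {m : ℕ} (q : ℕ) (k l : Fin m) :
    Rside (q + 1) k l = -(∑ i, E k i * Rside q i l - (m : ℂ) • Rside q k l) := by
  have h1 : ∑ i, E k i * Rside q i l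
      = ∑ p ∈ Finset.range (q + 1), KcT m (q - p) *
        (-Etil (p + 1) l k + (m : ℂ) • Etil p l k - (if l = k then CasT m p else 0)) := by
    simp only [Rside, Finset.mul_sum, ← E_Etil]
    rw [Finset.sum_comm]
    refine Finset.sum_congr rfl fun p _ => Finset.sum_congr rfl fun i _ => ?_
    rw [← mul_assoc, (KcT_comm (q - p) k i).eq, mul_assoc]
  have h3 : KcT m (q + 1) = ∑ p ∈ Finset.range (q + 1), KcT m (q - p) * CasT m p := by
    rw [KcT_succ, ← Finset.sum_range_reflect]
    refine Finset.sum_congr rfl fun p hp => ?_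
    have hp : p ≤ q := Nat.lt_succ_iff.mp (Finset.mem_range.mp hp)
    rw [show q + 1 - 1 - p = q - p by omega, show q - (q - p) = p by omega]
  rw [h1, Rside, Rside, Finset.sum_range_succ' _ (q + 1), Finset.smul_sum,
    ← Finset.sum_sub_distrib, ← Finset.sum_neg_distrib]
  simp only [Nat.add_sub_add_right, Nat.sub_zero, h3, Etil]
  rw [Finset.sum_mul, ← Finset.sum_add_distrib]
  refine Finset.sum_congr rfl fun p _ => ?_
  rw [mul_sub, mul_add, mul_smul_comm]
  split_ifs
  · rw [mul_one, mul_neg]; abel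
  · rw [mul_zero, mul_zero, mul_neg]; abel

theorem Lside_eq {m : ℕ} (q : ℕ) (k l : Fin m) :
    Lside q k l = (-1 : ℂ) ^ q • Rside q k l := by
  induction q generalizing k l with
  | zero => simp [Lside, Rside, Epow, Etil, KcT, eq_comm]
  | succ q ih =>
    rw [Lside_succ, Rside_succ, Finset.sum_congr rfl fun i _ => by rw [ih], ih, pow_succ,
      mul_smul, neg_one_smul, neg_neg, smul_sub, Finset.smul_sum, smul_comm (m : ℂ)]
    simp only [mul_smul_comm]

/-- Theorem 4.3, second identity:
`Σ_{p=0}^q C(q,p) (−m)^{q−p} e_{kl}^p = (−1)^q Σ_{p=0}^q K_{q−p}(−c̃) ẽ_{lk}^p`. -/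
theorem statement13 (m : ℕ) (hm : 1 ≤ m) (q : ℕ) (k l : Fin m) :
    ∑ p ∈ Finset.range (q + 1), ((q.choose p : ℂ) * (-(m : ℂ)) ^ (q - p)) • Epow p k l
      = (-1 : ℂ) ^ q • ∑ p ∈ Finset.range (q + 1), KcT m (q - p) * Etil p l k := by
  exact Lside_eq q k l
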